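/- There exists a universal constant d₀ ∈ ℕ such that for all d ≥ d₀, all r ∈ ℕ, and all ε ∈ [0,1/3): if A : P_{r,2d} → {0,1} is the indicator function of an independent set of the graph 𝒢 with E_{f∈P_{r,2d}}[A(f)] = 1/3 − ε, then Σ_{α ∈ Λ_{r,2d} : |α| > 1} |Â(α)|² ≤ 3ε. -/

import Mathlib

open scoped BigOperators

abbrev F3 := ZMod 3
abbrev Pt (r : ℕ) := Fin r → F3
abbrev Fn (r : ℕ) := Pt r → F3

/-- The set of functions `F₃^r → F₃` computed by polynomials of total degree at most `d`
with individual degrees at most `2`. -/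
def PolySet (r d : ℕ) : Set (Fn r) :=
  {g | ∃ P : MvPolynomial (Fin r) F3,
        P.totalDegree ≤ d ∧ (∀ i, P.degreeOf i ≤ 2) ∧
        ∀ x, g x = MvPolynomial.eval x P}

noncomputable def polyFinset (r d : ℕ) : Finset (Fn r) :=
  (Set.toFinite (PolySet r d)).toFinset

/-- Support size `|β|`. -/
def supp {r : ℕ} (β : Fn r) : ℕ := (Finset.univ.filter fun x => β x ≠ 0).card

/-- Dot product `⟨β, f⟩ = Σ_x β(x) f(x)` in `F₃`. -/
def dotF {r : ℕ} (β f : Fn r) : F3 := ∑ x, β x * f x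

noncomputable def ω : ℂ := Complex.exp (2 * (Real.pi : ℂ) * Complex.I / 3)

/-- The character `χ_β(f) = ω^{⟨β,f⟩}`. -/
noncomputable def chi {r : ℕ} (β f : Fn r) : ℂ := ω ^ (dotF β f).val

/-- The dual `S^⊥` of a set of functions. -/
def dualSet (r : ℕ) (S : Set (Fn r)) : Set (Fn r) := {g | ∀ h ∈ S, dotF g h = 0}

/-- `Λ` contains exactly one representative, of minimal support size, from each coset
of `𝔉_r` modulo `P_{r,d}^⊥`. -/
def IsMinRepSet (r d : ℕ) (Λ : Finset (Fn r)) : Prop :=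
  (∀ β : Fn r, ∃! β', β' ∈ Λ ∧ β - β' ∈ dualSet r (PolySet r d)) ∧
  (∀ β' ∈ Λ, ∀ γ : Fn r, β' - γ ∈ dualSet r (PolySet r d) → supp β' ≤ supp γ)

/-- The noise `a·(p² + 1)` (pointwise). -/
def shift {r : ℕ} (p : Fn r) (a : F3) : Fn r := fun x => a * (p x ^ 2 + 1)

/-- Fourier coefficient `Â(β)` of a function on `P_{r,d}`. -/
noncomputable def fourierP (r d : ℕ) (A : Fn r → ℂ) (β : Fn r) : ℂ :=
  (∑ g ∈ polyFinset r d, A g * (starRingEnd ℂ) (chi β g)) / ((polyFinset r d).card : ℂ)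

/-- Expectation `E_{f ∈ P_{r,d}}[A(f)]`. -/
noncomputable def expP (r d : ℕ) (A : Fn r → ℝ) : ℝ :=
  (∑ f ∈ polyFinset r d, A f) / ((polyFinset r d).card : ℝ)

/-- Degree-`k` influence `Inf_x^{≤k}(A)` with respect to a set `Λ` of minimal-support
coset representatives. -/
noncomputable def infP (r d k : ℕ) (Λ : Finset (Fn r)) (A : Fn r → ℝ) (x : Pt r) : ℝ :=
  ∑ β ∈ Λ.filter (fun β => β x ≠ 0 ∧ supp β ≤ k),
    ‖fourierP r d (fun g => (A g : ℂ)) β‖ ^ 2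


section Aux
open MvPolynomial


/-- monomial function attached to a multiset of variables -/
def mon {r : ℕ} (s : Multiset (Fin r)) : Fn r := fun x => (s.map x).prod

lemma mon_add {r : ℕ} (s t : Multiset (Fin r)) : mon (s + t) = mon s * mon t := by
  funext x; simp [mon]

lemma mon_cons {r : ℕ} (i : Fin r) (s : Multiset (Fin r)) (x : Pt r) :
    mon (i ::ₘ s) x = x i * mon s x := by
  simp [mon]

def PV (r d : ℕ) : Submodule F3 (Fn r) := Submodule.span F3 (mon '' {s | Multiset.card s ≤ d})

lemma mon_mem {r d : ℕ} {s : Multiset (Fin r)} (h : Multiset.card s ≤ d) : mon s ∈ PV r d :=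
  Submodule.subset_span ⟨s, h, rfl⟩

def red (n : ℕ) : ℕ := if n = 0 then 0 else if n % 2 = 1 then 1 else 2

lemma red_le (n : ℕ) : red n ≤ n := by unfold red; split_ifs <;> omega
lemma red_le2 (n : ℕ) : red n ≤ 2 := by unfold red; split_ifs <;> omega

lemma pow_red (a : F3) (n : ℕ) : a ^ red n = a ^ n := by
  induction n using Nat.strong_induction_on with
  | _ n ih =>
    by_cases h : n < 3
    · interval_cases n <;> simp [red]
    · obtain ⟨m, rfl⟩ : ∃ m, n = m + 3 := ⟨n - 3, by omega⟩
      have h1 : red (m + 3) = red (m + 1) := by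
        unfold red; split_ifs <;> omega
      rw [h1, ih (m + 1) (by omega), pow_add, pow_add]
      congr 1
      clear ih h h1; revert a; decide

lemma polySet_eq (r d : ℕ) : PolySet r d = (PV r d : Set (Fn r)) := by
  apply Set.Subset.antisymm
  · rintro g ⟨P, hP, -, hg⟩
    have : g = ∑ m ∈ P.support, P.coeff m • mon (Finsupp.toMultiset m) := by
      funext x
      rw [hg, MvPolynomial.eval_eq]
      simp only [Finset.sum_apply, Pi.smul_apply, smul_eq_mul]
      refine Finset.sum_congr rfl fun m _ => ?_
      congr 1
      simp only [mon, Finsupp.toMultiset_map, Finsupp.prod_toMultiset]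
      rw [Finsupp.prod_mapDomain_index (by simp) (by intros; rw [pow_add])]
      rfl
    rw [this]
    refine Submodule.sum_mem _ fun m hm => Submodule.smul_mem _ _ (mon_mem ?_)
    rw [Finsupp.card_toMultiset]
    exact (MvPolynomial.le_totalDegree hm).trans hP
  · intro g hg
    induction hg using Submodule.span_induction with
    | mem g h =>
      obtain ⟨s, hs, rfl⟩ := h
      let m : Fin r →₀ ℕ := Finsupp.equivFunOnFinite.symm fun i => red (s.count i)
      refine ⟨monomial m 1, ?_, ?_, ?_⟩
      · rw [totalDegree_monomial _ one_ne_zero, Finsupp.sum_fintype _ _ (by simp)]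
        refine le_trans ?_ hs
        rw [← Multiset.sum_count_eq_card (s := Finset.univ) (m := s) (by simp)]
        exact Finset.sum_le_sum fun i _ => red_le _
      · intro i
        rw [degreeOf_monomial_eq _ _ one_ne_zero]
        exact red_le2 _
      · intro x
        rw [eval_monomial, Finsupp.prod_fintype _ _ (by simp), one_mul]
        simp only [mon]
        rw [Finset.prod_multiset_map_count]
        rw [Finset.prod_subset (Finset.subset_univ s.toFinset)]
        · refine Finset.prod_congr rfl fun i _ => ?_
          exact (pow_red _ _).symm
        · intro i _ hi
          simp at hi
          simp [Multiset.count_eq_zero_of_notMem hi]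
    | zero => exact ⟨0, by simp, by simp, by simp⟩
    | add f g _ _ hf hg =>
      obtain ⟨P, h1, h2, h3⟩ := hf
      obtain ⟨Q, k1, k2, k3⟩ := hg
      refine ⟨P + Q, (totalDegree_add _ _).trans (max_le h1 k1), fun i => (degreeOf_add_le _ _ _).trans (max_le (h2 i) (k2 i)), fun x => by simp [h3, k3]⟩
    | smul a f _ hf =>
      obtain ⟨P, h1, h2, h3⟩ := hf
      refine ⟨C a * P, ?_, fun i => (degreeOf_C_mul_le _ _ _).trans (h2 i), fun x => by simp [h3]⟩
      rw [← smul_eq_C_mul]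
      exact (totalDegree_smul_le _ _).trans h1

lemma mem_polyFinset {r d : ℕ} {f : Fn r} : f ∈ polyFinset r d ↔ f ∈ PV r d := by
  simp [polyFinset, polySet_eq]

lemma mul_mem_PV {r d : ℕ} {f g : Fn r} (hf : f ∈ PV r d) (hg : g ∈ PV r d) :
    f * g ∈ PV r (2 * d) := by
  induction hf using Submodule.span_induction with
  | mem f h =>
    obtain ⟨s, hs, rfl⟩ := h
    induction hg using Submodule.span_induction with
    | mem g h =>
      obtain ⟨t, ht, rfl⟩ := h
      rw [← mon_add]
      apply mon_mem
      have hsd : Multiset.card s ≤ d := hs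
      have htd : Multiset.card t ≤ d := ht
      rw [Multiset.card_add]
      omega
    | zero => simp
    | add f g _ _ hf hg => rw [mul_add]; exact add_mem hf hg
    | smul a f _ hf => rw [mul_smul_comm]; exact Submodule.smul_mem _ _ hf
  | zero => simp
  | add f g _ _ hf hg => rw [add_mul]; exact add_mem hf hg
  | smul a f _ hf => rw [smul_mul_assoc]; exact Submodule.smul_mem _ _ hf

lemma shift_mem {r d : ℕ} {p : Fn r} (hp : p ∈ PV r d) (a : F3) : shift p a ∈ PV r (2 * d) := by
  have : shift p a = a • (p * p + mon 0) := by
    funext x; simp [shift, mon, sq]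
  rw [this]
  exact Submodule.smul_mem _ _ (add_mem (mul_mem_PV hp hp) (mon_mem (by simp)))

/-- dot product as a linear map -/
def dotL {r : ℕ} (β : Fn r) : Fn r →ₗ[F3] F3 where
  toFun f := dotF β f
  map_add' f g := by simp [dotF, mul_add, Finset.sum_add_distrib]
  map_smul' a f := by
    simp only [dotF, Pi.smul_apply, smul_eq_mul, RingHom.id_apply, Finset.mul_sum]
    exact Finset.sum_congr rfl fun _ _ => by ring

lemma dotL_apply {r : ℕ} (β f : Fn r) : dotL β f = dotF β f := rfl

lemma dotF_comm {r : ℕ} (β f : Fn r) : dotF β f = dotF f β := by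
  simp [dotF, mul_comm]

lemma dotF_sub_left {r : ℕ} (β γ f : Fn r) : dotF (β - γ) f = dotF β f - dotF γ f := by
  simp [dotF, sub_mul]

lemma dotF_single {r : ℕ} (z : Pt r) (c : F3) (f : Fn r) : dotF (Pi.single z c) f = c * f z := by
  unfold dotF
  rw [Finset.sum_eq_single z]
  · simp
  · intro b _ hb; simp [Pi.single_eq_of_ne hb]
  · simp

lemma mem_dual_iff {r d : ℕ} {β : Fn r} :
    β ∈ dualSet r (PolySet r d) ↔ ∀ s : Multiset (Fin r), Multiset.card s ≤ d → dotF β (mon s) = 0 := by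
  rw [polySet_eq]
  constructor
  · intro h s hs
    exact h _ (mon_mem hs)
  · intro h f hf
    have : PV r d ≤ LinearMap.ker (dotL β) := by
      unfold PV
      rw [Submodule.span_le]
      rintro _ ⟨s, hs, rfl⟩
      exact h s hs
    exact this hf

lemma exists_split {r d : ℕ} (u : Multiset (Fin r)) (hu : Multiset.card u ≤ 2 * d) :
    ∃ s t, u = s + t ∧ Multiset.card s ≤ d ∧ Multiset.card t ≤ d := by
  induction u using Quotient.inductionOn with
  | _ l =>
    refine ⟨(l.take d : Multiset _), (l.drop d : Multiset _), ?_, ?_, ?_⟩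
    · simp
    · simp
    · simp at hu ⊢; omega

/-- The combinatorial core: a rank one form comes from a point. -/
lemma core {r d : ℕ} (hd : 2 ≤ d) (β : Fn r) (c : F3) (l : Multiset (Fin r) → F3)
    (h : ∀ s t, Multiset.card s ≤ d → Multiset.card t ≤ d →
      dotF β (mon (s + t)) = c * l s * l t) :
    ∃ γ : Fn r, supp γ ≤ 1 ∧ β - γ ∈ dualSet r (PolySet r (2 * d)) := by
  have zero_case : (∀ s t, Multiset.card s ≤ d → Multiset.card t ≤ d → c * l s * l t = 0) →
      ∃ γ : Fn r, supp γ ≤ 1 ∧ β - γ ∈ dualSet r (PolySet r (2 * d)) := by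
    intro h0
    refine ⟨0, by simp [supp], ?_⟩
    rw [mem_dual_iff]
    intro u hu
    obtain ⟨s, t, rfl, hs, ht⟩ := exists_split u hu
    rw [sub_zero, h s t hs ht, h0 s t hs ht]
  by_cases hc : c = 0
  · exact zero_case (by simp [hc])
  by_cases hl : ∃ s0, Multiset.card s0 + 1 ≤ d ∧ l s0 ≠ 0
  · obtain ⟨s0, hs0, hl0⟩ := hl
    let z : Pt r := fun i => l (i ::ₘ s0) / l s0
    have step : ∀ i s, Multiset.card s + 1 ≤ d → l (i ::ₘ s) = z i * l s := by
      intro i s hs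
      have e1 := h (i ::ₘ s) s0 (by simpa using hs) (by omega)
      have e2 := h s (i ::ₘ s0) (by omega) (by simpa using hs0)
      rw [show i ::ₘ s + s0 = s + i ::ₘ s0 by simp, e2] at e1
      have : l s * l (i ::ₘ s0) = l (i ::ₘ s) * l s0 := by
        apply mul_left_cancel₀ hc; linear_combination e1
      simp only [z]
      field_simp
      linear_combination -this
    have all : ∀ s, Multiset.card s ≤ d → l s = mon s z * l 0 := by
      intro s
      induction s using Multiset.induction_on with
      | empty => intro _; simp [mon]
      | cons i s ih =>
        intro hs
        rw [Multiset.card_cons] at hs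
        rw [step i s hs, ih (by omega), mon_cons]; ring
    refine ⟨Pi.single z (c * l 0 * l 0), ?_, ?_⟩
    · unfold supp
      refine (Finset.card_le_card (t := {z}) ?_).trans (by simp)
      intro x hx
      simp only [Finset.mem_filter, Finset.mem_univ, true_and] at hx
      simp only [Finset.mem_singleton]
      by_contra hne
      exact hx (Pi.single_eq_of_ne hne _)
    · rw [mem_dual_iff]
      intro u hu
      obtain ⟨s, t, rfl, hs, ht⟩ := exists_split u hu
      rw [dotF_sub_left, dotF_single, h s t hs ht, all s hs, all t ht, mon_add, Pi.mul_apply]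
      ring
  · push Not at hl
    apply zero_case
    have dup : ∀ i t, Multiset.card t + 2 ≤ d → l (i ::ₘ i ::ₘ t) = 0 := by
      intro i t ht
      have e1 := h (i ::ₘ i ::ₘ t) (i ::ₘ i ::ₘ t) (by simp; omega) (by simp; omega)
      have e2 := h (i ::ₘ i ::ₘ t) t (by simp; omega) (by omega)
      have : mon (i ::ₘ i ::ₘ t + i ::ₘ i ::ₘ t) = mon (i ::ₘ i ::ₘ t + t) := by
        funext x
        simp only [mon_add, Pi.mul_apply, mon_cons]
        generalize x i = a
        generalize mon t x = b
        revert a b; decide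
      rw [this, e2, hl t (by omega)] at e1
      have := e1.symm
      simpa [hc] using this
    have all : ∀ s, Multiset.card s ≤ d → l s = 0 := by
      intro s hs
      by_cases hs1 : Multiset.card s + 1 ≤ d
      · exact hl s hs1
      · obtain ⟨i, s1, rfl⟩ : ∃ i s1, s = i ::ₘ s1 := by
          have : 0 < Multiset.card s := by omega
          obtain ⟨i, hi⟩ := Multiset.card_pos_iff_exists_mem.1 this
          exact ⟨i, _, (Multiset.cons_erase hi).symm⟩
        rw [Multiset.card_cons] at hs hs1
        obtain ⟨j, t, rfl⟩ : ∃ i s, s1 = i ::ₘ s := by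
          have : 0 < Multiset.card s1 := by omega
          obtain ⟨i, hi⟩ := Multiset.card_pos_iff_exists_mem.1 this
          exact ⟨i, _, (Multiset.cons_erase hi).symm⟩
        rw [Multiset.card_cons] at hs hs1
        have e1 := h (i ::ₘ j ::ₘ t) (i ::ₘ j ::ₘ t) (by simpa using hs) (by simpa using hs)
        have e2 := h (i ::ₘ i ::ₘ t) (j ::ₘ j ::ₘ t) (by simpa using hs) (by simpa using hs)
        have : mon (i ::ₘ j ::ₘ t + i ::ₘ j ::ₘ t) = mon (i ::ₘ i ::ₘ t + j ::ₘ j ::ₘ t) := by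
          funext x
          simp only [mon_add, Pi.mul_apply, mon_cons]
          ring
        rw [this, e2, dup i t (by omega)] at e1
        have := e1.symm
        simpa [hc] using this
    intro s t hs _
    rw [all s hs]; ring

/-- The bilinear form `(p,q) ↦ ⟨β, pq⟩` on `P_{r,d}`. -/
def Bform {r : ℕ} (d : ℕ) (β : Fn r) : PV r d →ₗ[F3] Module.Dual F3 (PV r d) :=
  LinearMap.mk₂ F3 (fun p q => dotF β (p.1 * q.1))
    (fun p p' q => by rw [← dotL_apply]; simp [add_mul, map_add]; rfl)
    (fun c p q => by rw [← dotL_apply]; simp [dotL_apply])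
    (fun p q q' => by rw [← dotL_apply]; simp [mul_add, map_add]; rfl)
    (fun c p q => by rw [← dotL_apply]; simp [dotL_apply])

lemma Bform_apply {r d : ℕ} (β : Fn r) (p q : PV r d) : Bform d β p q = dotF β (p.1 * q.1) := rfl

lemma rank_core {r d : ℕ} (hd : 2 ≤ d) (β : Fn r)
    (hβ : ∀ γ : Fn r, supp γ ≤ 1 → β - γ ∉ dualSet r (PolySet r (2 * d))) :
    2 ≤ Module.finrank F3 (LinearMap.range (Bform d β)) := by
  by_contra hlt
  have h1 : Module.finrank F3 (LinearMap.range (Bform d β)) ≤ 1 := by omega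
  rw [finrank_le_one_iff] at h1
  obtain ⟨⟨φ, hφ⟩, hv⟩ := h1
  have hex : ∀ p : PV r d, ∃ a : F3, Bform d β p = a • φ := by
    intro p
    obtain ⟨a, ha⟩ := hv ⟨Bform d β p, LinearMap.mem_range_self _ _⟩
    exact ⟨a, (congrArg Subtype.val ha).symm⟩
  choose a ha using hex
  have hB : ∀ p q : PV r d, dotF β (p.1 * q.1) = a p * φ q := by
    intro p q
    rw [← Bform_apply, ha]; rfl
  have key : ∃ c : F3, ∀ p q : PV r d, dotF β (p.1 * q.1) = c * φ p * φ q := by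
    by_cases h0 : ∃ q0, φ q0 ≠ 0
    · obtain ⟨q0, hq0⟩ := h0
      refine ⟨a q0 / φ q0, fun p q => ?_⟩
      have := hB p q0
      rw [mul_comm, hB q0 p] at this
      rw [hB p q]
      field_simp
      linear_combination (-φ q) * this
    · push Not at h0
      exact ⟨0, fun p q => by rw [hB, h0]; ring⟩
  obtain ⟨c, hc⟩ := key
  obtain ⟨γ, h1, h2⟩ := core hd β c
    (fun s => if hs : Multiset.card s ≤ d then φ ⟨mon s, mon_mem hs⟩ else 0) (by
      intro s t hs ht
      rw [dif_pos hs, dif_pos ht, ← hc, mon_add])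
  exact hβ γ h1 h2

end Aux

section Fourier

lemma omega_pow : ω ^ 3 = 1 := by
  rw [ω, ← Complex.exp_nat_mul, ← Complex.exp_two_pi_mul_I]
  congr 1; push_cast; ring

noncomputable def eχ : AddChar F3 ℂ := AddChar.zmodChar 3 omega_pow

lemma chi_eq {r : ℕ} (β f : Fn r) : chi β f = eχ (dotF β f) := by
  rw [chi, eχ, AddChar.zmodChar_apply]

lemma eχ_one : eχ 1 = ω := by
  rw [eχ, AddChar.zmodChar_apply]
  exact pow_one _

lemma omega_re : ω.re = -1 / 2 := by
  rw [ω, show (2 * (Real.pi : ℂ) * Complex.I / 3) = ((2 * Real.pi / 3 : ℝ) : ℂ) * Complex.I by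
    push_cast; ring, Complex.exp_ofReal_mul_I_re,
    show 2 * Real.pi / 3 = Real.pi - Real.pi / 3 by ring, Real.cos_pi_sub, Real.cos_pi_div_three]
  norm_num

lemma eχ_conj (c : F3) : (starRingEnd ℂ) (eχ c) = eχ (-c) := (AddChar.map_neg_eq_conj _ _).symm

lemma eχ_re {c : F3} (hc : c ≠ 0) : (eχ c).re = -1 / 2 := by
  have h : c = 1 ∨ c = -1 := by revert c; decide
  rcases h with rfl | rfl
  · rw [eχ_one, omega_re]
  · rw [← eχ_conj, eχ_one, Complex.conj_re, omega_re]

lemma eχ_re_ge (c : F3) : -1 / 2 ≤ (eχ c).re := by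
  by_cases hc : c = 0
  · rw [hc, AddChar.map_zero_eq_one]; norm_num
  · rw [eχ_re hc]

lemma eχ_norm (c : F3) : ‖eχ c‖ = 1 := AddChar.norm_apply _ _

lemma eχ_ne {c : F3} (hc : c ≠ 0) : eχ c ≠ 1 := by
  intro h
  have := eχ_re hc
  rw [h] at this; norm_num at this

lemma sum_char {V : Type*} [AddCommGroup V] [Module F3 V] [Fintype V] (ψ : V →ₗ[F3] F3) :
    (ψ = 0 → ∑ v, eχ (ψ v) = (Fintype.card V : ℂ)) ∧ (ψ ≠ 0 → ∑ v, eχ (ψ v) = 0) := by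
  constructor
  · rintro rfl; simp
  · intro h
    obtain ⟨v0, hv0⟩ : ∃ v, ψ v ≠ 0 := by
      by_contra hcon; push Not at hcon
      exact h (LinearMap.ext hcon)
    have h1 : ∑ v, eχ (ψ v) = eχ (ψ v0) * ∑ v, eχ (ψ v) := by
      rw [Finset.mul_sum, ← Equiv.sum_comp (Equiv.addLeft v0)]
      refine Finset.sum_congr rfl fun v _ => ?_
      simp [AddChar.map_add_eq_mul]
    have h2 : (eχ (ψ v0) - 1) * ∑ v, eχ (ψ v) = 0 := by linear_combination -h1
    exact (mul_eq_zero.1 h2).resolve_left (sub_ne_zero.2 (eχ_ne hv0))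

noncomputable instance {r d : ℕ} : Fintype (PV r d) := Fintype.ofFinite _

lemma gauss {r d : ℕ} (β : Fn r)
    (hB : 2 ≤ Module.finrank F3 (LinearMap.range (Bform d β))) :
    ‖∑ p : PV r d, eχ (dotF β (p.1 * p.1))‖ ≤ (Fintype.card (PV r d) : ℝ) / 3 := by
  classical
  set T := ∑ p : PV r d, eχ (dotF β (p.1 * p.1)) with hT
  set K := LinearMap.ker (Bform d β) with hK
  have h1 : T * (starRingEnd ℂ) T = (Fintype.card (PV r d) : ℂ) * (Nat.card K : ℂ) := by
    have e1 : T * (starRingEnd ℂ) T = ∑ q : PV r d, ∑ h : PV r d,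
        eχ (dotF β (h.1 * h.1)) * eχ ((2 : F3) • Bform d β h q) := by
      rw [mul_comm, hT, map_sum, Finset.sum_mul]
      refine Finset.sum_congr rfl fun q _ => ?_
      rw [Finset.mul_sum, ← Equiv.sum_comp (Equiv.addLeft q)]
      refine Finset.sum_congr rfl fun h _ => ?_
      rw [eχ_conj, ← AddChar.map_add_eq_mul, ← AddChar.map_add_eq_mul]
      congr 1
      rw [Bform_apply]
      have : dotF β ((q + h).1 * (q + h).1) = dotF β (q.1 * q.1) + dotF β (h.1 * h.1) +
          (2 : F3) • dotF β (h.1 * q.1) := by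
        simp only [← dotL_apply, ← map_add, ← map_smul]
        congr 1
        funext x
        simp only [Submodule.coe_add, Pi.mul_apply, Pi.add_apply, Pi.smul_apply, smul_eq_mul]
        ring
      simp only [Equiv.coe_addLeft]
      rw [this]; ring
    rw [e1, Finset.sum_comm]
    have e2 : ∀ h : PV r d, ∑ q : PV r d,
        eχ (dotF β (h.1 * h.1)) * eχ ((2 : F3) • Bform d β h q) =
        if h ∈ K then (Fintype.card (PV r d) : ℂ) else 0 := by
      intro h
      rw [← Finset.mul_sum]
      have hs := sum_char ((2 : F3) • Bform d β h)
      by_cases hh : h ∈ K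
      · rw [if_pos hh]
        have h0 : Bform d β h = 0 := hh
        have h00 : dotF β (h.1 * h.1) = 0 := by
          rw [← Bform_apply, h0]; rfl
        rw [h00, AddChar.map_zero_eq_one, one_mul]
        exact hs.1 (by rw [h0, smul_zero])
      · rw [if_neg hh]
        have h0 : Bform d β h ≠ 0 := hh
        have := hs.2 (smul_ne_zero (by decide) h0)
        simp only [LinearMap.smul_apply] at this
        rw [this, mul_zero]
    rw [Finset.sum_congr rfl fun h _ => e2 h, ← Finset.sum_filter, Finset.sum_const, nsmul_eq_mul,
      mul_comm]
    congr 2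
    rw [Nat.card_eq_fintype_card, Fintype.card_subtype]
  have h2 : ‖T‖ ^ 2 = (Fintype.card (PV r d) : ℝ) * (Nat.card K : ℝ) := by
    rw [Complex.mul_conj, Complex.normSq_eq_norm_sq] at h1
    exact_mod_cast h1
  have h3 : 9 * Nat.card K ≤ Fintype.card (PV r d) := by
    have e := Submodule.card_eq_card_quotient_mul_card K
    rw [Nat.card_congr (LinearMap.quotKerEquivRange (Bform d β)).toEquiv,
      Module.natCard_eq_pow_finrank (K := F3) (V := LinearMap.range (Bform d β)), Nat.card_zmod,
      Nat.card_eq_fintype_card (α := PV r d)] at e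
    rw [e]
    have : 3 ^ 2 ≤ 3 ^ Module.finrank F3 (LinearMap.range (Bform d β)) :=
      Nat.pow_le_pow_right (by norm_num) hB
    nlinarith [Nat.zero_le (Nat.card K)]
  have h3r : 9 * (Nat.card K : ℝ) ≤ (Fintype.card (PV r d) : ℝ) := by exact_mod_cast h3
  have hn : (0 : ℝ) ≤ (Fintype.card (PV r d) : ℝ) := by positivity
  refine (pow_le_pow_iff_left₀ (norm_nonneg _) (by positivity) two_ne_zero).1 ?_
  rw [h2]
  nlinarith

end Fourier

section Corr

lemma sum_polyFinset {r d : ℕ} {E : Type*} [AddCommMonoid E] (G : Fn r → E) :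
    ∑ f ∈ polyFinset r d, G f = ∑ f : PV r d, G f.1 := by
  classical
  exact Finset.sum_subtype _ (fun f => mem_polyFinset) G

lemma card_polyFinset (r d : ℕ) : (polyFinset r d).card = Fintype.card (PV r d) := by
  rw [Finset.card_eq_sum_ones, sum_polyFinset]; simp

lemma dotF_ext {r : ℕ} {f : Fn r} (h : ∀ β, dotF β f = 0) : f = 0 := by
  funext x
  have := h (Pi.single x 1)
  rw [dotF_single] at this
  simpa using this

lemma sum_all {r : ℕ} (f : Fn r) [Decidable (f = 0)] :
    ∑ β : Fn r, eχ (dotF β f) = if f = 0 then (Fintype.card (Fn r) : ℂ) else 0 := by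
  have hs := sum_char (dotL f)
  simp only [dotL_apply] at hs
  simp only [dotF_comm _ f]
  split_ifs with h
  · apply hs.1
    ext g
    simp [dotL_apply, h, dotF]
  · apply hs.2
    intro h0
    apply h
    apply dotF_ext
    intro β
    rw [dotF_comm, ← dotL_apply, h0]; rfl

lemma card_dual (r d : ℕ) [DecidablePred fun β : Fn r => β ∈ dualSet r (PolySet r d)] :
    (Fintype.card (Fn r) : ℝ) = (Fintype.card (PV r d) : ℝ) *
      ((Finset.univ.filter (fun β => β ∈ dualSet r (PolySet r d))).card : ℝ) := by
  classical
  have h1 : ∑ f : PV r d, ∑ β : Fn r, eχ (dotF β f.1) = (Fintype.card (Fn r) : ℂ) := by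
    rw [Finset.sum_eq_single (0 : PV r d)]
    · rw [sum_all]; simp
    · intro f _ hf
      rw [sum_all, if_neg]
      simpa using hf
    · simp
  rw [Finset.sum_comm] at h1
  have h2 : ∀ β : Fn r, ∑ f : PV r d, eχ (dotF β f.1) =
      if β ∈ dualSet r (PolySet r d) then (Fintype.card (PV r d) : ℂ) else 0 := by
    intro β
    have hs := sum_char ((dotL β).comp (PV r d).subtype)
    simp only [LinearMap.comp_apply, Submodule.subtype_apply, dotL_apply] at hs
    split_ifs with h <;> rw [polySet_eq] at h
    · apply hs.1
      ext f
      exact h f.1 f.2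
    · apply hs.2
      intro h0
      apply h
      intro f hf
      exact LinearMap.congr_fun h0 ⟨f, hf⟩
  rw [Finset.sum_congr rfl fun β _ => h2 β, ← Finset.sum_filter, Finset.sum_const,
    nsmul_eq_mul] at h1
  rw [mul_comm]
  exact_mod_cast h1.symm

lemma fourierP_congr {r d : ℕ} (A : Fn r → ℂ) (β γ : Fn r)
    (h : β - γ ∈ dualSet r (PolySet r d)) : fourierP r d A β = fourierP r d A γ := by
  unfold fourierP
  congr 1
  rw [sum_polyFinset, sum_polyFinset]
  refine Finset.sum_congr rfl fun f _ => ?_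
  rw [polySet_eq] at h
  have := h f.1 f.2
  rw [dotF_sub_left, sub_eq_zero] at this
  rw [chi_eq, chi_eq, this]

lemma corr (r d : ℕ) (A : Fn r → ℝ) (h : PV r d) :
    ∑ β : Fn r, ((‖fourierP r d (fun f => (A f : ℂ)) β‖ ^ 2 : ℝ) : ℂ) * eχ (dotF β h.1) =
      (((Fintype.card (Fn r) : ℝ) / (Fintype.card (PV r d) : ℝ) ^ 2 *
        ∑ f : PV r d, A f.1 * A (f + h).1 : ℝ) : ℂ) := by
  classical
  set n : ℂ := (Fintype.card (PV r d) : ℂ) with hn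
  have e1 : ∀ β : Fn r, ((‖fourierP r d (fun f => (A f : ℂ)) β‖ ^ 2 : ℝ) : ℂ) * eχ (dotF β h.1) =
      (∑ f : PV r d, ∑ g : PV r d, (A f.1 * A g.1 : ℂ) * eχ (dotF β (f + h - g).1)) / n ^ 2 := by
    intro β
    rw [← Complex.normSq_eq_norm_sq, ← Complex.mul_conj, fourierP, sum_polyFinset, card_polyFinset,
      map_div₀, map_sum, ← hn]
    have hcn : (starRingEnd ℂ) n = n := by rw [hn]; simp
    rw [hcn, div_mul_div_comm, mul_comm (∑ g : PV r d, _) (∑ g : PV r d, _), Finset.sum_mul_sum,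
      div_mul_eq_mul_div, Finset.sum_mul, ← sq]
    congr 1
    refine Finset.sum_congr rfl fun f _ => ?_
    rw [Finset.sum_mul]
    refine Finset.sum_congr rfl fun g _ => ?_
    have : eχ (dotF β (f + h - g).1) = eχ (dotF β f.1) * eχ (-dotF β g.1) * eχ (dotF β h.1) := by
      rw [← AddChar.map_add_eq_mul, ← AddChar.map_add_eq_mul]
      congr 1
      simp only [← dotL_apply, ← map_add, ← map_neg]
      congr 1
      simp only [Submodule.coe_sub, Submodule.coe_add]
      abel
    rw [this, map_mul, chi_eq, chi_eq, Complex.conj_conj, eχ_conj, Complex.conj_ofReal]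
    ring
  rw [Finset.sum_congr rfl fun β _ => e1 β, ← Finset.sum_div, Finset.sum_comm]
  have e2 : ∀ f : PV r d, ∑ β : Fn r, ∑ g : PV r d,
      (A f.1 * A g.1 : ℂ) * eχ (dotF β (f + h - g).1) =
      (Fintype.card (Fn r) : ℂ) * (A f.1 * A (f + h).1) := by
    intro f
    rw [Finset.sum_comm, Finset.sum_eq_single (f + h)]
    · rw [← Finset.mul_sum, sum_all, if_pos (by simp)]; ring
    · intro g _ hg
      rw [← Finset.mul_sum, sum_all, if_neg, mul_zero]
      intro h0
      apply hg
      have : f + h - g = 0 := Subtype.ext h0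
      exact (sub_eq_zero.1 this).symm
    · simp
  rw [Finset.sum_congr rfl fun f _ => e2 f, ← Finset.mul_sum]
  push_cast
  rw [hn]; ring

end Corr

/-- Fourier concentration for near-maximum independent sets (Lemma 3.9): there is `d₀`
such that for `d ≥ d₀`, if `A` is the indicator of an independent set of `𝒢` on
`P_{r,2d}` with `E[A] = 1/3 − ε` (`ε ∈ [0,1/3)`), then the Fourier mass of `A` above
level 1 is at most `3ε`. -/
theorem stmt15 :
    ∃ d₀ : ℕ, ∀ d : ℕ, d₀ ≤ d → ∀ r : ℕ, ∀ ε : ℝ, 0 ≤ ε → ε < 1 / 3 →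
      ∀ A : Fn r → ℝ,
        (∀ f ∈ polyFinset r (2 * d), A f = 0 ∨ A f = 1) →
        (∀ f ∈ polyFinset r (2 * d), ∀ p ∈ polyFinset r d, ∀ a : F3, (a = 1 ∨ a = 2) →
          ¬(A f = 1 ∧ A (f + shift p a) = 1)) →
        expP r (2 * d) A = 1 / 3 - ε →
        ∀ Λ : Finset (Fn r), IsMinRepSet r (2 * d) Λ →
          (∑ α ∈ Λ.filter (fun α => 1 < supp α),
              ‖fourierP r (2 * d) (fun f => (A f : ℂ)) α‖ ^ 2) ≤ 3 * ε := by
  refine ⟨2, fun d hd r ε hε0 hε1 A hA01 hAind hAexp Λ hΛ => ?_⟩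
  classical
  have hmem : ∀ f : PV r (2 * d), f.1 ∈ polyFinset r (2 * d) := fun f => mem_polyFinset.2 f.2
  set w : Fn r → ℝ := fun β => ‖fourierP r (2 * d) (fun f => (A f : ℂ)) β‖ ^ 2 with hw
  set D : Finset (Fn r) := Finset.univ.filter (fun β => β ∈ dualSet r (PolySet r (2 * d))) with hD
  set n : ℝ := (Fintype.card (PV r (2 * d)) : ℝ) with hn
  set N : ℝ := (Fintype.card (Fn r) : ℝ) with hN
  have hn0 : 0 < n := by rw [hn]; exact_mod_cast Fintype.card_pos
  have hNK : N = n * D.card := card_dual r (2 * d)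
  have hK0 : (0 : ℝ) < D.card := by
    have : (0 : Fn r) ∈ D := by
      simp [hD, mem_dual_iff, dotF]
    exact_mod_cast Finset.card_pos.2 ⟨0, this⟩
  have hw0 : ∀ β, 0 ≤ w β := fun β => by positivity
  have hcoset : ∀ β γ, β - γ ∈ dualSet r (PolySet r (2 * d)) → w β = w γ := by
    intro β γ h
    simp only [hw, fourierP_congr _ _ _ h]
  have hexp : (∑ f : PV r (2 * d), A f.1) = n * (1 / 3 - ε) := by
    rw [← hAexp, expP, sum_polyFinset, card_polyFinset, ← hn]
    field_simp
  have hwD : ∀ β ∈ D, w β = (1 / 3 - ε) ^ 2 := by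
    intro β hβ
    simp only [hD, Finset.mem_filter, Finset.mem_univ, true_and] at hβ
    rw [hcoset β 0 (by simpa using hβ)]
    simp only [hw]
    have : fourierP r (2 * d) (fun f => (A f : ℂ)) 0 = ((1 / 3 - ε : ℝ) : ℂ) := by
      rw [← hAexp, fourierP, expP]
      push_cast
      congr 1
      refine Finset.sum_congr rfl fun f _ => ?_
      rw [chi_eq, show dotF 0 f = 0 by simp [dotF], AddChar.map_zero_eq_one]; simp
    rw [this, Complex.norm_real, Real.norm_eq_abs, sq_abs]
  -- Parseval
  have hpars : ∑ β, w β = D.card * (1 / 3 - ε) := by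
    have h := corr r (2 * d) A 0
    have e1 : ∑ f : PV r (2 * d), A f.1 * A (f + 0 : PV r (2 * d)).1 = n * (1 / 3 - ε) := by
      rw [← hexp]
      refine Finset.sum_congr rfl fun f _ => ?_
      rw [add_zero]
      rcases hA01 _ (hmem f) with h | h <;> rw [h] <;> norm_num
    rw [e1] at h
    have e2 : ∀ β : Fn r, eχ (dotF β (0 : PV r (2 * d)).1) = 1 := by
      intro β
      rw [show dotF β (0 : PV r (2 * d)).1 = 0 by simp [dotF], AddChar.map_zero_eq_one]
    simp only [e2, mul_one] at h
    have hpw : ∑ β, w β = N / n ^ 2 * (n * (1 / 3 - ε)) := by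
      apply Complex.ofReal_injective
      rw [← h, Complex.ofReal_sum]
    rw [hpw, hNK]; field_simp
  -- independence
  have hind : ∀ p : PV r d, ∑ β, (w β : ℂ) * eχ (dotF β (shift p.1 1)) = 0 := by
    intro p
    have h := corr r (2 * d) A ⟨shift p.1 1, shift_mem p.2 1⟩
    have e1 : ∑ f : PV r (2 * d), A f.1 *
        A (f + ⟨shift p.1 1, shift_mem p.2 1⟩ : PV r (2 * d)).1 = 0 := by
      refine Finset.sum_eq_zero fun f _ => ?_
      have h1 := hAind _ (hmem f) _ (mem_polyFinset.2 p.2) 1 (Or.inl rfl)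
      have h2 := hA01 _ (hmem (f + ⟨shift p.1 1, shift_mem p.2 1⟩))
      rcases hA01 _ (hmem f) with h | h
      · rw [h, zero_mul]
      · rcases h2 with h2 | h2
        · rw [h2, mul_zero]
        · exact absurd ⟨h, h2⟩ h1
    rw [e1, mul_zero, Complex.ofReal_zero] at h
    exact h
  set M : ℝ := (Fintype.card (PV r d) : ℝ) with hM
  have hM0 : 0 < M := by rw [hM]; exact_mod_cast Fintype.card_pos
  set lam : Fn r → ℝ := fun β => (∑ p : PV r d, eχ (dotF β (shift p.1 1))).re with hlam
  have hsum0 : ∑ β, w β * lam β = 0 := by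
    have h : ∑ p : PV r d, ∑ β, (w β : ℂ) * eχ (dotF β (shift p.1 1)) = 0 :=
      Finset.sum_eq_zero fun p _ => hind p
    rw [Finset.sum_comm] at h
    have h2 := congrArg Complex.re h
    rw [Complex.re_sum, Complex.zero_re] at h2
    rw [← h2]
    refine Finset.sum_congr rfl fun β _ => ?_
    rw [← Finset.mul_sum, Complex.re_ofReal_mul]
  have hlam1 : ∀ β ∈ D, lam β = M := by
    intro β hβ
    simp only [hD, Finset.mem_filter, Finset.mem_univ, true_and] at hβ
    rw [polySet_eq] at hβ
    have : ∀ p : PV r d, eχ (dotF β (shift p.1 1)) = 1 := fun p => by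
      rw [hβ _ (shift_mem p.2 1), AddChar.map_zero_eq_one]
    simp [hlam, this, hM]
  have hlam2 : ∀ β, -(M / 2) ≤ lam β := by
    intro β
    simp only [hlam]
    rw [Complex.re_sum]
    have : ∑ p : PV r d, (-1 / 2 : ℝ) ≤ ∑ p : PV r d, (eχ (dotF β (shift p.1 1))).re :=
      Finset.sum_le_sum fun p _ => eχ_re_ge _
    rw [Finset.sum_const, nsmul_eq_mul, Finset.card_univ] at this
    linarith
  set Bg : Finset (Fn r) := Finset.univ.filter (fun β => ∀ γ : Fn r, supp γ ≤ 1 →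
    β - γ ∉ dualSet r (PolySet r (2 * d))) with hBg
  have hlam3 : ∀ β ∈ Bg, -(M / 3) ≤ lam β := by
    intro β hβ
    simp only [hBg, Finset.mem_filter, Finset.mem_univ, true_and] at hβ
    have hg := gauss β (rank_core hd β hβ)
    have e : ∑ p : PV r d, eχ (dotF β (shift p.1 1)) =
        eχ (dotF β 1) * ∑ p : PV r d, eχ (dotF β (p.1 * p.1)) := by
      rw [Finset.mul_sum]
      refine Finset.sum_congr rfl fun p _ => ?_
      rw [← AddChar.map_add_eq_mul]
      congr 1
      simp only [← dotL_apply, ← map_add]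
      congr 1
      funext x
      simp only [shift, Pi.add_apply, Pi.mul_apply, Pi.one_apply]
      ring
    have h2 : ‖∑ p : PV r d, eχ (dotF β (shift p.1 1))‖ ≤ M / 3 := by
      rw [e, norm_mul, eχ_norm, one_mul]; exact hg
    have h3 := Complex.abs_re_le_norm (∑ p : PV r d, eχ (dotF β (shift p.1 1)))
    have h4 := neg_abs_le (∑ p : PV r d, eχ (dotF β (shift p.1 1))).re
    simp only [hlam]
    linarith
  have hdisj : ∀ β ∈ D, β ∉ Bg := by
    intro β hβ hb
    simp only [hD, hBg, Finset.mem_filter, Finset.mem_univ, true_and] at hβ hb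
    exact hb 0 (by simp [supp]) (by simpa using hβ)
  have hpt : ∀ β, w β * (-(M / 2)) + (if β ∈ D then w β * (3 * M / 2) else 0) +
      (if β ∈ Bg then w β * (M / 6) else 0) ≤ w β * lam β := by
    intro β
    by_cases h1 : β ∈ D
    · rw [if_pos h1, if_neg (hdisj β h1), hlam1 β h1]; linarith
    · rw [if_neg h1]
      by_cases h2 : β ∈ Bg
      · rw [if_pos h2]
        nlinarith [mul_le_mul_of_nonneg_left (hlam3 β h2) (hw0 β)]
      · rw [if_neg h2]
        nlinarith [mul_le_mul_of_nonneg_left (hlam2 β) (hw0 β)]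
  have htot := Finset.sum_le_sum fun β (_ : β ∈ Finset.univ) => hpt β
  rw [hsum0, Finset.sum_add_distrib, Finset.sum_add_distrib, ← Finset.sum_mul, hpars,
    ← Finset.sum_filter, ← Finset.sum_filter, Finset.filter_univ_mem, Finset.filter_univ_mem,
    ← Finset.sum_mul, ← Finset.sum_mul, Finset.sum_congr rfl hwD, Finset.sum_const,
    nsmul_eq_mul] at htot
  -- compare with the sum over representatives
  have hrep : (D.card : ℝ) * ∑ α ∈ Λ.filter (fun α => 1 < supp α), w α ≤ ∑ β ∈ Bg, w β := by
    have e : (D.card : ℝ) * ∑ α ∈ Λ.filter (fun α => 1 < supp α), w α =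
        ∑ x ∈ (Λ.filter (fun α => 1 < supp α)) ×ˢ D, w (x.1 + x.2) := by
      rw [Finset.sum_product, Finset.mul_sum]
      refine Finset.sum_congr rfl fun α _ => ?_
      rw [← nsmul_eq_mul, ← Finset.sum_const]
      refine Finset.sum_congr rfl fun v hv => ?_
      simp only [hD, Finset.mem_filter, Finset.mem_univ, true_and] at hv
      exact (hcoset _ _ (by simpa using hv)).symm
    have hinj : Set.InjOn (fun x : Fn r × Fn r => x.1 + x.2)
        ((Λ.filter (fun α => 1 < supp α)) ×ˢ D : Finset (Fn r × Fn r)) := by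
      rintro ⟨α, v⟩ h1 ⟨α', v'⟩ h2 h
      simp only [hD, Finset.coe_product, Set.mem_prod, Finset.mem_coe, Finset.mem_filter,
        Finset.mem_univ, true_and] at h1 h2 h
      have hu := (hΛ.1 (α + v)).unique (y₁ := α) (y₂ := α') ⟨h1.1.1, by simpa using h1.2⟩
        ⟨h2.1.1, by rw [h]; simpa using h2.2⟩
      subst hu
      simpa using h
    rw [e, ← Finset.sum_image (f := w) hinj]
    refine Finset.sum_le_sum_of_subset_of_nonneg ?_ fun β _ _ => hw0 β
    intro β hβ
    obtain ⟨⟨α, v⟩, h1, rfl⟩ := Finset.mem_image.1 hβ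
    simp only [hD, hBg, Finset.mem_product, Finset.mem_filter, Finset.mem_univ, true_and] at h1 ⊢
    intro γ hγ hmem
    have : α - γ ∈ dualSet r (PolySet r (2 * d)) := by
      rw [mem_dual_iff] at *
      intro s hs
      have a1 := hmem s hs
      have a2 := h1.2 s hs
      have : dotF (α - γ) (mon s) = dotF (α + v - γ) (mon s) - dotF v (mon s) := by
        rw [← dotF_sub_left]; congr 1; abel
      rw [this, a1, a2, sub_zero]
    have := hΛ.2 α h1.1.1 γ this
    omega
  set W := ∑ α ∈ Λ.filter (fun α => 1 < supp α), w α with hW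
  set K : ℝ := (D.card : ℝ) with hK
  have hfin : K * M * (W / 6) ≤ K * M * (ε / 2) := by
    have : K * W * (M / 6) ≤ (∑ β ∈ Bg, w β) * (M / 6) :=
      mul_le_mul_of_nonneg_right hrep (by positivity)
    have hKM : 0 < K * M := mul_pos hK0 hM0
    nlinarith [mul_nonneg hKM.le (sq_nonneg ε)]
  have := le_of_mul_le_mul_left hfin (mul_pos hK0 hM0)
  linarith
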